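/- Assume p^2·e_0 − (p+1)·b_2 + (p−1)·b_1 > 0. For all 0 ≤ j, r < p^2, π_0^{−w_j}·Ψ^{(j)}·ρ_r ≡ π_0^{d_{j+r} − d_r − w_j}·ρ_{j+r} mod 𝔐_2^{p^2·e_0 − p·b_2 − (p^2−p+1)·b_1} (with ρ_{j+r} = 0 when j + r ≥ p^2); equality holds when there is no carry in adding the p-adic expansions of j and r. -/

import Mathlib

/-- A normalized discrete valuation on a field `K`, recorded as a function
`v : K → ℤ`.  The value of `v` at `0` is irrelevant: all conditions below only
refer to nonzero elements (the convention `v 0 = ∞` being understood). -/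
structure IsDiscVal {K : Type*} [Field K] (v : K → ℤ) : Prop where
  map_one : v 1 = 0
  map_mul : ∀ x y : K, x ≠ 0 → y ≠ 0 → v (x * y) = v x + v y
  min_le_add : ∀ x y : K, x ≠ 0 → y ≠ 0 → x + y ≠ 0 → min (v x) (v y) ≤ v (x + y)
  exists_uniformizer : ∃ π : K, π ≠ 0 ∧ v π = 1

/-- `n ≤ v x`, with the convention `v 0 = ∞`. -/
def ValGE {K : Type*} [Field K] (v : K → ℤ) (n : ℤ) (x : K) : Prop := x = 0 ∨ n ≤ v x

namespace IsDiscVal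

variable {K : Type*} [Field K] {v : K → ℤ}

theorem map_neg_one (hv : IsDiscVal v) : v (-1) = 0 := by
  have h := hv.map_mul (-1) (-1) (by simp) (by simp)
  rw [neg_one_mul, neg_neg, hv.map_one] at h
  omega

theorem map_neg (hv : IsDiscVal v) (x : K) : v (-x) = v x := by
  rcases eq_or_ne x 0 with rfl | hx
  · simp
  · rw [← neg_one_mul, hv.map_mul _ _ (by simp) hx, hv.map_neg_one, zero_add]

theorem map_pow (hv : IsDiscVal v) {x : K} (hx : x ≠ 0) (n : ℕ) : v (x ^ n) = n * v x := by
  induction n with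
  | zero => simp [hv.map_one]
  | succ n ih => rw [pow_succ, hv.map_mul _ _ (pow_ne_zero _ hx) hx, ih]; push_cast; ring

theorem map_inv (hv : IsDiscVal v) {x : K} (hx : x ≠ 0) : v x⁻¹ = -v x := by
  have h := hv.map_mul x x⁻¹ hx (inv_ne_zero hx)
  rw [mul_inv_cancel₀ hx, hv.map_one] at h
  omega

theorem map_zpow (hv : IsDiscVal v) {x : K} (hx : x ≠ 0) (n : ℤ) : v (x ^ n) = n * v x := by
  obtain ⟨k, rfl | rfl⟩ := n.eq_nat_or_neg
  · rw [zpow_natCast, hv.map_pow hx]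
  · rw [zpow_neg, zpow_natCast, hv.map_inv (pow_ne_zero _ hx), hv.map_pow hx]; ring

end IsDiscVal

namespace ValGE

variable {K : Type*} [Field K] {v : K → ℤ} {a b n : ℤ} {x y : K}

theorem zero (n : ℤ) : ValGE v n 0 := Or.inl rfl

theorem self (x : K) : ValGE v (v x) x := Or.inr le_rfl

theorem mono (h : ValGE v a x) (hab : b ≤ a) : ValGE v b x := h.imp_right hab.trans

theorem le (h : ValGE v n x) (hx : x ≠ 0) : n ≤ v x := h.resolve_left hx

theorem neg (hv : IsDiscVal v) (h : ValGE v n x) : ValGE v n (-x) := by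
  rcases h with rfl | h
  · simpa using zero n
  · exact Or.inr (by rwa [hv.map_neg])

theorem add (hv : IsDiscVal v) (hx : ValGE v n x) (hy : ValGE v n y) : ValGE v n (x + y) := by
  rcases eq_or_ne x 0 with rfl | hx0
  · simpa using hy
  rcases eq_or_ne y 0 with rfl | hy0
  · simpa using hx
  rcases eq_or_ne (x + y) 0 with h | h
  · exact Or.inl h
  · exact Or.inr ((le_min (hx.le hx0) (hy.le hy0)).trans (hv.min_le_add x y hx0 hy0 h))

theorem sub (hv : IsDiscVal v) (hx : ValGE v n x) (hy : ValGE v n y) : ValGE v n (x - y) := by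
  rw [sub_eq_add_neg]
  exact hx.add hv (hy.neg hv)

theorem mul (hv : IsDiscVal v) (hx : ValGE v a x) (hy : ValGE v b y) :
    ValGE v (a + b) (x * y) := by
  rcases eq_or_ne x 0 with rfl | hx0
  · simpa using zero _
  rcases eq_or_ne y 0 with rfl | hy0
  · simpa using zero _
  · exact Or.inr (by rw [hv.map_mul x y hx0 hy0]; exact add_le_add (hx.le hx0) (hy.le hy0))

theorem one (hv : IsDiscVal v) : ValGE v 0 (1 : K) := Or.inr hv.map_one.ge

theorem pow (hv : IsDiscVal v) (hx : ValGE v a x) (k : ℕ) : ValGE v (k * a) (x ^ k) := by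
  induction k with
  | zero => simpa using one hv
  | succ k ih => rw [pow_succ]; exact (ih.mul hv hx).mono (by push_cast; linarith)

theorem natCast (hv : IsDiscVal v) (k : ℕ) : ValGE v 0 (k : K) := by
  induction k with
  | zero => simpa using zero 0
  | succ k ih => rw [Nat.cast_succ]; exact ih.add hv (one hv)

theorem sum (hv : IsDiscVal v) {ι : Type*} {s : Finset ι} {f : ι → K}
    (h : ∀ i ∈ s, ValGE v n (f i)) : ValGE v n (∑ i ∈ s, f i) :=
  Finset.sum_induction f (ValGE v n) (fun _ _ ha hb => ha.add hv hb) (zero n) h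

end ValGE

namespace IsDiscVal

variable {K : Type*} [Field K] {v : K → ℤ}

theorem not_valGE_succ {x : K} (hx : x ≠ 0) : ¬ ValGE v (v x + 1) x := fun h => by
  have := h.le hx
  omega

/-- The dominant term of a sum determines its valuation. -/
theorem add_eq_of_lt (hv : IsDiscVal v) {x y : K} (hx : x ≠ 0) (hy : ValGE v (v x + 1) y) :
    x + y ≠ 0 ∧ v (x + y) = v x := by
  have hne : x + y ≠ 0 := fun h => by
    have hneg := hy.neg hv
    rw [← eq_neg_of_add_eq_zero_left h] at hneg
    exact not_valGE_succ hx hneg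
  have hge := (((ValGE.self x).add hv (hy.mono (by omega))).le hne : v x ≤ v (x + y))
  refine ⟨hne, le_antisymm ?_ hge⟩
  by_contra! hlt
  have h : ValGE v (v x + 1) (x + y - y) := ValGE.sub hv (Or.inr hlt) hy
  rw [add_sub_cancel_right] at h
  exact not_valGE_succ hx h

/-- A sum of nonzero terms of pairwise distinct valuations has the valuation of its
least term. -/
theorem exists_sum_eq (hv : IsDiscVal v) {ι : Type*} {s : Finset ι} {f : ι → K}
    (hs : s.Nonempty) (h0 : ∀ i ∈ s, f i ≠ 0)
    (hinj : ∀ i ∈ s, ∀ j ∈ s, v (f i) = v (f j) → i = j) :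
    ∑ i ∈ s, f i ≠ 0 ∧ ∀ j ∈ s, v (∑ i ∈ s, f i) ≤ v (f j) := by
  classical
  obtain ⟨i, hi, hmin⟩ := s.exists_min_image (fun i => v (f i)) hs
  have hrest : ValGE v (v (f i) + 1) (∑ j ∈ s.erase i, f j) := by
    refine ValGE.sum hv fun j hj => Or.inr ?_
    obtain ⟨hne, hj⟩ := Finset.mem_erase.1 hj
    exact lt_of_le_of_ne (hmin j hj) fun h => hne (hinj i hi j hj h).symm
  have h := hv.add_eq_of_lt (h0 i hi) hrest
  rw [Finset.add_sum_erase _ _ hi] at h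
  exact ⟨h.1, fun j hj => h.2.le.trans (hmin j hj)⟩

theorem valGE_of_sum (hv : IsDiscVal v) {ι : Type*} {s : Finset ι} {f : ι → K} {n : ℤ}
    (hinj : ∀ i ∈ s, ∀ j ∈ s, f i ≠ 0 → f j ≠ 0 → v (f i) = v (f j) → i = j)
    (h : ValGE v n (∑ i ∈ s, f i)) {j : ι} (hj : j ∈ s) : ValGE v n (f j) := by
  classical
  by_cases hfj : f j = 0
  · exact Or.inl hfj
  have hmem : j ∈ s.filter (fun i => f i ≠ 0) := Finset.mem_filter.2 ⟨hj, hfj⟩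
  have key := hv.exists_sum_eq (s := s.filter fun i => f i ≠ 0) (f := f) ⟨j, hmem⟩
    (fun i hi => (Finset.mem_filter.1 hi).2) fun i hi k hk =>
      hinj i (Finset.mem_filter.1 hi).1 k (Finset.mem_filter.1 hk).1
        (Finset.mem_filter.1 hi).2 (Finset.mem_filter.1 hk).2
  rw [Finset.sum_filter_ne_zero] at key
  exact Or.inr ((h.le key.1).trans (key.2 j hmem))

theorem valGE_inv_natCast_of_coprime (hv : IsDiscVal v) {p n : ℕ}
    (hvp : 0 < v (p : K)) (h : n.Coprime p) : ValGE v 0 ((n : K)⁻¹) := by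
  rcases eq_or_ne (n : K) 0 with hn | hn
  · simp [hn, ValGE.zero]
  refine Or.inr ?_
  rw [hv.map_inv hn]
  by_contra! hlt
  have hn1 : ValGE v 1 (n : K) := Or.inr (by omega)
  have hp1 : ValGE v 1 (p : K) := Or.inr (by omega)
  have hint : ∀ z : ℤ, ValGE v 0 (z : K) := fun z => by
    obtain ⟨k, rfl | rfl⟩ := z.eq_nat_or_neg
    · simpa using ValGE.natCast hv k
    · simpa using (ValGE.natCast hv k).neg hv
  have hbez := Nat.gcd_eq_gcd_ab n p
  rw [Nat.Coprime.gcd_eq_one h] at hbez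
  have hone : (n : K) * (n.gcdA p : ℤ) + p * (n.gcdB p : ℤ) = 1 := by
    have := congrArg (Int.cast : ℤ → K) hbez
    push_cast at this
    exact this.symm
  have h1 : ValGE v 1 (1 : K) := hone ▸
    (((hn1.mul hv (hint _)).mono (by omega)).add hv ((hp1.mul hv (hint _)).mono (by omega)))
  have := h1.le one_ne_zero
  rw [hv.map_one] at this
  omega

/-- A lower bound for the valuation of a root of `z ^ p - z = c`. -/
theorem valGE_of_pow_sub (hv : IsDiscVal v) {p : ℕ} (hp : 2 ≤ p) {z : K} {k : ℤ} (hk : k ≤ 0)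
    (h : ValGE v (p * k) (z ^ p - z)) : ValGE v k z := by
  by_contra hz
  rw [ValGE, not_or, not_le] at hz
  obtain ⟨hz0, hlt⟩ := hz
  have hp' : (2 : ℤ) ≤ p := by exact_mod_cast hp
  have hpow : v (z ^ p) = p * v z := hv.map_pow hz0 p
  have hd := hv.add_eq_of_lt (pow_ne_zero p hz0) (y := -z)
    (Or.inr (by rw [hv.map_neg, hpow]; nlinarith))
  rw [← sub_eq_add_neg, hpow] at hd
  have := h.le hd.1
  rw [hd.2] at this
  nlinarith

/-- Bound for the mixed terms of `(x + y) ^ p`. -/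
theorem valGE_mixed (hv : IsDiscVal v) {p : ℕ} {x y : K} {a b n : ℤ} (hx : ValGE v a x)
    (hy : ValGE v b y) (hn : ∀ k : ℕ, 0 < k → k < p → n ≤ k * a + ((p : ℤ) - k) * b) :
    ValGE v n (∑ k ∈ Finset.Ioo 0 p, x ^ k * y ^ (p - k) * ((p.choose k / p : ℕ) : K)) := by
  refine ValGE.sum hv fun k hk => ?_
  obtain ⟨h0, h1⟩ := Finset.mem_Ioo.1 hk
  refine (((hx.pow hv k).mul hv (hy.pow hv (p - k))).mul hv (ValGE.natCast hv _)).mono ?_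
  rw [Nat.cast_sub h1.le, add_zero]
  exact hn k h0 h1

theorem valGE_witt [CharZero K] (hv : IsDiscVal v) {p : ℕ} (hp : p.Prime) {x y : K} {a b n : ℤ}
    (hx : ValGE v a x) (hy : ValGE v b y)
    (hn : ∀ k : ℕ, 0 < k → k < p → n ≤ k * a + ((p : ℤ) - k) * b) :
    ValGE v n ((x ^ p + y ^ p - (x + y) ^ p) / (p : K)) := by
  have hp0 : (p : K) ≠ 0 := by exact_mod_cast hp.ne_zero
  rw [add_pow_prime_eq' hp, sub_add_cancel_left, neg_div, mul_div_cancel_left₀ _ hp0]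
  exact (hv.valGE_mixed hx hy hn).neg hv

end IsDiscVal

section Raises

variable {F K : Type*} [Field F] [Field K] [Algebra F K] {v : K → ℤ}

/-- The operator `A` raises valuations by at least `c`. -/
def Raises (v : K → ℤ) (c : ℤ) (A : Module.End F K) : Prop :=
  ∀ n x, ValGE v n x → ValGE v (n + c) (A x)

namespace Raises

variable {A B : Module.End F K} {a b c : ℤ}

theorem mono (h : Raises v a A) (hba : b ≤ a) : Raises v b A :=
  fun n x hx => (h n x hx).mono (by omega)

theorem one : Raises v 0 (1 : Module.End F K) := fun n x hx => by simpa using hx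

theorem add (hv : IsDiscVal v) (hA : Raises v c A) (hB : Raises v c B) : Raises v c (A + B) :=
  fun n x hx => (hA n x hx).add hv (hB n x hx)

theorem neg (hv : IsDiscVal v) (hA : Raises v c A) : Raises v c (-A) :=
  fun n x hx => (hA n x hx).neg hv

theorem sub (hv : IsDiscVal v) (hA : Raises v c A) (hB : Raises v c B) : Raises v c (A - B) :=
  fun n x hx => (hA n x hx).sub hv (hB n x hx)

theorem mul (hA : Raises v a A) (hB : Raises v b B) : Raises v (a + b) (A * B) :=
  fun n x hx => (hA _ _ (hB n x hx)).mono (by omega)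

theorem pow (hA : Raises v a A) (k : ℕ) : Raises v (k * a) (A ^ k) := by
  induction k with
  | zero => simpa using one
  | succ k ih => rw [pow_succ]; exact (ih.mul hA).mono (by push_cast; linarith)

theorem smul (hv : IsDiscVal v) {s : F} (hs : ValGE v b (algebraMap F K s)) (hA : Raises v a A) :
    Raises v (b + a) (s • A) := fun n x hx => by
  rw [LinearMap.smul_apply, Algebra.smul_def]
  exact (hs.mul hv (hA n x hx)).mono (by omega)

theorem natCast (hv : IsDiscVal v) {k : ℕ} (hk : ValGE v c (k : K)) :
    Raises v c (k : Module.End F K) := fun n x hx => by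
  rw [Module.End.natCast_apply, nsmul_eq_mul]
  exact (hk.mul hv hx).mono (by omega)

theorem sum (hv : IsDiscVal v) {ι : Type*} {s : Finset ι} {f : ι → Module.End F K}
    (h : ∀ i ∈ s, Raises v c (f i)) : Raises v c (∑ i ∈ s, f i) :=
  Finset.sum_induction f (Raises v c) (fun _ _ ha hb => ha.add hv hb)
    (fun _ _ _ => by simpa using ValGE.zero _) h

/-- The mixed terms of `(1 + A) ^ p` are divisible by `p`. -/
theorem one_add_pow_sub (hv : IsDiscVal v) {p : ℕ} (hp : p.Prime) (ha : 0 ≤ a)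
    (hA : Raises v a A) : Raises v (v (p : K) + a) ((1 + A) ^ p - 1 - A ^ p) := by
  rw [(Commute.one_left A).add_pow_prime_eq' hp, one_pow, sub_sub, add_sub_cancel_left]
  refine (natCast hv (ValGE.self _)).mul (sum hv fun k hk => ?_)
  obtain ⟨h0, h1⟩ := Finset.mem_Ioo.1 hk
  rw [one_pow, one_mul]
  refine ((hA.pow (p - k)).mul (natCast hv (ValGE.natCast hv _))).mono ?_
  have : (1 : ℤ) ≤ (p - k : ℕ) := by omega
  nlinarith

end Raises

end Raises

section Extension

variable {F K : Type*} [Field F] [Field K] [Algebra F K] {v0 : F → ℤ} {v : K → ℤ}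

/-- In a cyclic extension of degree `p ^ 2`, the `p`-th power of any automorphism fixes the roots
of `X ^ p - X - a`. -/
theorem AlgEquiv.pow_prime_apply_of_pow_sub {p : ℕ} (hp : p.Prime) [IsGalois F K]
    [FiniteDimensional F K] (hdeg : Module.finrank F K = p ^ 2) (hcyc : IsCyclic (K ≃ₐ[F] K))
    {x : K} {a : F} (hx : x ^ p - x = algebraMap F K a) (σ : K ≃ₐ[F] K) : (σ ^ p) x = x := by
  open Polynomial in
  have hint : IsIntegral F x := Algebra.IsIntegral.isIntegral x
  have hmon : (X ^ p - (X + C a) : F[X]).Monic := by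
    refine monic_X_pow_sub (lt_of_eq_of_lt (degree_X_add_C a) ?_)
    exact_mod_cast hp.one_lt
  have hnat : (X ^ p - (X + C a) : F[X]).natDegree = p := by
    rw [natDegree_sub_eq_left_of_natDegree_lt] <;> rw [natDegree_X_pow]
    rw [natDegree_X_add_C]
    exact hp.one_lt
  have hle : (minpoly F x).natDegree ≤ p := hnat ▸ natDegree_le_of_dvd
    (minpoly.dvd F x (by simp [← hx])) hmon.ne_zero
  have hfin : Module.finrank F (IntermediateField.adjoin F {x}) = (minpoly F x).natDegree :=
    IntermediateField.adjoin.finrank hint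
  have hdvd : Module.finrank F (IntermediateField.adjoin F {x}) ∣ p := by
    have h2 : Module.finrank F (IntermediateField.adjoin F {x}) ∣ p ^ 2 :=
      hdeg ▸ ⟨_, (Module.finrank_mul_finrank F (IntermediateField.adjoin F {x}) K).symm⟩
    obtain ⟨k, -, hk⟩ := (Nat.dvd_prime_pow hp).1 h2
    rw [hk]
    rw [← hfin, hk] at hle
    have : k ≤ 1 := (Nat.pow_le_pow_iff_right hp.one_lt).1 (by simpa using hle)
    exact (pow_dvd_pow p this).trans (pow_one p).dvd
  rw [IntermediateField.finrank_eq_fixingSubgroup_index] at hdvd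
  let _ : CommGroup (K ≃ₐ[F] K) := hcyc.commGroup
  have hmem : σ ^ p ∈ (IntermediateField.adjoin F {x}).fixingSubgroup := by
    obtain ⟨t, ht⟩ := hdvd
    rw [ht, pow_mul]
    exact Subgroup.pow_mem _ (Subgroup.pow_index_mem _ σ) t
  exact (IntermediateField.mem_fixingSubgroup_iff _ _).1 hmem x
    (IntermediateField.mem_adjoin_simple_self F x)

/-- In a totally ramified extension, powers of an element of valuation prime to the degree form a
basis for which the terms of an expansion have at least the valuation of the sum. -/
theorem IsDiscVal.exists_expansion (hv : IsDiscVal v) {p : ℕ} (hp : p.Prime)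
    (hdeg : Module.finrank F K = p ^ 2)
    (hram : ∀ x : F, x ≠ 0 → v (algebraMap F K x) = (p : ℤ) ^ 2 * v0 x)
    {X : K} (hX : X ≠ 0) (hXv : ¬ (p : ℤ) ∣ v X) {x : K} {n : ℤ} (hx : ValGE v n x) :
    ∃ c : Fin (p ^ 2) → F, x = ∑ i, c i • X ^ (i : ℕ) ∧ ∀ i, ValGE v n (c i • X ^ (i : ℕ)) := by
  have hdist : ∀ c : Fin (p ^ 2) → F, ∀ i ∈ Finset.univ, ∀ j ∈ Finset.univ,
      c i • X ^ (i : ℕ) ≠ 0 → c j • X ^ (j : ℕ) ≠ 0 →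
      v (c i • X ^ (i : ℕ)) = v (c j • X ^ (j : ℕ)) → i = j := by
    intro c i _ j _ hi hj h
    have hval : ∀ k, c k • X ^ (k : ℕ) ≠ 0 →
        v (c k • X ^ (k : ℕ)) = (p : ℤ) ^ 2 * v0 (c k) + (k : ℕ) * v X := by
      intro k hk
      have hck : c k ≠ 0 := fun h => hk (by simp [h])
      rw [Algebra.smul_def, hv.map_mul _ _ (by simpa using hck) (pow_ne_zero _ hX), hram _ hck,
        hv.map_pow hX]
    rw [hval i hi, hval j hj] at h
    have hdvd : (p : ℤ) ^ 2 ∣ ((i : ℕ) - (j : ℕ) : ℤ) * v X :=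
      ⟨v0 (c j) - v0 (c i), by linear_combination h⟩
    have hcop : IsCoprime ((p : ℤ) ^ 2) (v X) :=
      ((Nat.prime_iff_prime_int.1 hp).coprime_iff_not_dvd.2 hXv).pow_left
    have hmod := hcop.dvd_of_dvd_mul_right hdvd
    have hi' : ((i : ℕ) : ℤ) < (p : ℤ) ^ 2 := by exact_mod_cast i.2
    have hj' : ((j : ℕ) : ℤ) < (p : ℤ) ^ 2 := by exact_mod_cast j.2
    have := Int.eq_zero_of_abs_lt_dvd hmod (by rw [abs_lt]; omega)
    exact Fin.ext (by omega)
  have hli : LinearIndependent F fun i : Fin (p ^ 2) => X ^ (i : ℕ) := by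
    rw [Fintype.linearIndependent_iff]
    intro c hc i
    by_contra hci
    have hne : c i • X ^ (i : ℕ) ≠ 0 := smul_ne_zero hci (pow_ne_zero _ hX)
    exact IsDiscVal.not_valGE_succ hne
      (hv.valGE_of_sum (hdist c) (Or.inl hc) (Finset.mem_univ i))
  have : Nonempty (Fin (p ^ 2)) := ⟨⟨0, pow_pos hp.pos 2⟩⟩
  let B := basisOfLinearIndependentOfCardEqFinrank hli (by rw [Fintype.card_fin, hdeg])
  have hsum : x = ∑ i, B.repr x i • X ^ (i : ℕ) := by
    conv_lhs => rw [← B.sum_repr x]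
    simp [B]
  refine ⟨fun i => B.repr x i, hsum, fun i => ?_⟩
  exact hv.valGE_of_sum (f := fun i => B.repr x i • X ^ (i : ℕ)) (hdist fun i => B.repr x i)
    (hsum ▸ hx) (Finset.mem_univ i)

/-- How much `σ - 1` raises valuations can be read off from a single element of valuation prime
to the degree. -/
theorem IsDiscVal.raises_sub_one (hv : IsDiscVal v) {p : ℕ} (hp : p.Prime)
    (hdeg : Module.finrank F K = p ^ 2)
    (hram : ∀ x : F, x ≠ 0 → v (algebraMap F K x) = (p : ℤ) ^ 2 * v0 x)
    {X : K} (hX : X ≠ 0) (hXv : ¬ (p : ℤ) ∣ v X) {σ : K ≃ₐ[F] K} {c : ℤ} (hc : 0 ≤ c)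
    (hσ : ValGE v (v X + c) (σ X - X)) :
    Raises v c ((σ.toLinearMap : Module.End F K) - 1) := by
  have hpow : ∀ k : ℕ, ValGE v (k * v X + c) (σ (X ^ k) - X ^ k) := by
    intro k
    induction k with
    | zero => simpa using ValGE.zero _
    | succ k ih =>
      have hXk : ValGE v (k * v X) (X ^ k) := (ValGE.self X).pow hv k
      have hσX : ValGE v (k * v X) (σ (X ^ k)) := by
        have := (ih.mono (by omega)).add hv hXk
        rwa [sub_add_cancel] at this
      have heq : σ (X ^ (k + 1)) - X ^ (k + 1) =
          σ (X ^ k) * (σ X - X) + (σ (X ^ k) - X ^ k) * X := by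
        rw [pow_succ, _root_.map_mul]; ring
      rw [heq]
      refine ((hσX.mul hv hσ).mono ?_).add hv ((ih.mul hv (ValGE.self X)).mono ?_) <;>
      · push_cast; linarith
  intro n x hx
  obtain ⟨a, hsum, ha⟩ := hv.exists_expansion hp hdeg hram hX hXv hx
  rw [hsum, map_sum]
  refine ValGE.sum hv fun i _ => ?_
  rw [map_smul]
  rcases eq_or_ne (a i) 0 with h0 | h0
  · simpa [h0] using ValGE.zero _
  have hai : algebraMap F K (a i) ≠ 0 := by simpa using h0
  have hle := (ha i).le (smul_ne_zero h0 (pow_ne_zero _ hX))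
  rw [Algebra.smul_def, hv.map_mul _ _ hai (pow_ne_zero _ hX), hv.map_pow hX] at hle
  rw [Algebra.smul_def]
  exact ((ValGE.self _).mul hv (hpow i)).mono (by linarith)

end Extension

section Generators

variable {K : Type*} [Field K] {v : K → ℤ}

/-- The exact valuation of a root of `z ^ p - z = c`. -/
theorem IsDiscVal.map_of_pow_sub (hv : IsDiscVal v) {p : ℕ} (hp : 2 ≤ p) {z c : K} {k : ℤ}
    (hk : k < 0) (hc : c ≠ 0) (hcv : v c = p * k) (h : z ^ p - z = c) : z ≠ 0 ∧ v z = k := by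
  have hp' : (2 : ℤ) ≤ p := by exact_mod_cast hp
  have hz0 : z ≠ 0 := by
    rintro rfl
    rw [zero_pow (by omega), sub_zero] at h
    exact hc h.symm
  have hge : k ≤ v z := (hv.valGE_of_pow_sub hp hk.le (by rw [h]; exact Or.inr hcv.ge)).le hz0
  refine ⟨hz0, le_antisymm ?_ hge⟩
  by_contra! hlt
  have hz : ValGE v (k + 1) z := Or.inr hlt
  have hge : ValGE v (v c + 1) (z ^ p - z) :=
    ((hz.pow hv p).mono (by rw [hcv]; nlinarith)).sub hv (hz.mono (by rw [hcv]; nlinarith))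
  exact IsDiscVal.not_valGE_succ hc (h ▸ hge)

/-- Two roots of `z ^ p - z = c` differ by an integral element when the valuation of `p` is large. -/
theorem IsDiscVal.valGE_zero_of_pow_sub_eq (hv : IsDiscVal v) {p : ℕ} (hp : p.Prime) {x y : K}
    {s : ℤ} (hs : 0 ≤ s) (hx : ValGE v (-s) x) (hpv : (p - 1) * s < v (p : K))
    (h : (x + y) ^ p - (x + y) = x ^ p - x) : ValGE v 0 y := by
  by_contra hy
  rw [ValGE, not_or, not_le] at hy
  obtain ⟨hy0, hlt⟩ := hy
  have hp' : (2 : ℤ) ≤ p := by exact_mod_cast hp.two_le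
  have hpow : v (y ^ p) = p * v y := hv.map_pow hy0 p
  have hmix := hv.valGE_mixed (p := p) (n := p * v y - v (p : K) + 1) hx (ValGE.self y) (by
    intro k hk hkp
    have h1 : (1 : ℤ) ≤ k := by exact_mod_cast hk
    have h2 : (k : ℤ) ≤ p - 1 := by
      have : k + 1 ≤ p := hkp
      have : ((k + 1 : ℕ) : ℤ) ≤ p := by exact_mod_cast this
      push_cast at this; omega
    nlinarith)
  have hmul := (ValGE.self (v := v) (p : K)).mul hv hmix
  set S := ∑ k ∈ Finset.Ioo 0 p, x ^ k * y ^ (p - k) * ((p.choose k / p : ℕ) : K)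
  have hyS : y ^ p + (p * S - y) = 0 := by
    rw [add_pow_prime_eq' hp] at h
    linear_combination h
  have hrest : ValGE v (v (y ^ p) + 1) (p * S - y) :=
    (hmul.mono (by rw [hpow]; linarith)).sub hv (Or.inr (by rw [hpow]; nlinarith))
  exact (hv.add_eq_of_lt (pow_ne_zero p hy0) hrest).1 hyS

/-- The valuation of `x₂ - μ x₁`, for generators `x₁`, `x₂` of the extension. -/
theorem IsDiscVal.map_sub_mul [CharZero K] (hv : IsDiscVal v) {p : ℕ} (hp : p.Prime)
    {a μ x₁ x₂ : K} {b M : ℤ} (ha : a ≠ 0) (hμ : μ ≠ 0) (hb : 0 < b) (hM : 0 < M)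
    (hav : v a = p * (-(p * b))) (hμv : v μ = -M) (hpv : ((p : ℤ) ^ 2 - p) * b < v (p : K))
    (hMb : ((p : ℤ) ^ 2 - p) * b < M)
    (hx₁ : x₁ ^ p - x₁ = a)
    (hx₂ : x₂ ^ p - x₂ = μ ^ p * a + (x₁ ^ p + a ^ p - (x₁ + a) ^ p) / (p : K)) :
    ValGE v (-(p * b)) x₁ ∧ ValGE v (-(M + p * b)) x₂ ∧ x₂ - μ * x₁ ≠ 0 ∧
      v (x₂ - μ * x₁) = -(M + b) := by
  have hp' : (2 : ℤ) ≤ p := by exact_mod_cast hp.two_le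
  obtain ⟨hx₁0, hx₁v⟩ := hv.map_of_pow_sub hp.two_le (by nlinarith) ha hav hx₁
  have hx₁ge : ValGE v (-(p * b)) x₁ := Or.inr hx₁v.ge
  have hage : ValGE v (-(p * (p * b))) a := Or.inr (by linarith)
  have hμge : ValGE v (-M) μ := Or.inr hμv.ge
  have hD : ValGE v (-(p * (M + b)) + 1) ((x₁ ^ p + a ^ p - (x₁ + a) ^ p) / (p : K)) := by
    refine hv.valGE_witt hp hx₁ge hage fun k hk _ => ?_
    have h1 : (1 : ℤ) ≤ k := by exact_mod_cast hk
    have h2 : 0 ≤ ((k : ℤ) - 1) * ((p : ℤ) * (p - 1) * b) := by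
      refine mul_nonneg (by omega) (mul_nonneg (mul_nonneg (by omega) (by omega)) hb.le)
    nlinarith
  have hx₂ge : ValGE v (-(M + p * b)) x₂ := by
    refine hv.valGE_of_pow_sub hp.two_le (by nlinarith) ?_
    rw [hx₂]
    refine (((hμge.pow hv p).mul hv hage).mono (by linarith)).add hv (hD.mono ?_)
    have : 0 ≤ p * (p - 1) * b := mul_nonneg (mul_nonneg (by omega) (by omega)) hb.le
    linarith
  have hXge : ValGE v (-(M + p * b)) (x₂ - μ * x₁) :=
    hx₂ge.sub hv ((hμge.mul hv hx₁ge).mono (by linarith))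
  have hmix := hv.valGE_mixed (p := p) (n := -(p * (M + p * b))) hXge
    ((hμge.mul hv hx₁ge).mono (by linarith : -(M + p * b) ≤ _)) fun k _ _ => by linarith
  have hpow := add_pow_prime_eq' hp (x₂ - μ * x₁) (μ * x₁)
  have hmul := (ValGE.self (v := v) (p : K)).mul hv hmix
  set S := ∑ k ∈ Finset.Ioo 0 p,
    (x₂ - μ * x₁) ^ k * (μ * x₁) ^ (p - k) * ((p.choose k / p : ℕ) : K)
  rw [sub_add_cancel, mul_pow] at hpow
  have hXp : (x₂ - μ * x₁) ^ p = -(μ ^ p * x₁) +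
      (x₂ + (x₁ ^ p + a ^ p - (x₁ + a) ^ p) / (p : K) - p * S) := by
    linear_combination hx₂ - hpow - μ ^ p * hx₁
  have hlead0 : -(μ ^ p * x₁) ≠ 0 := neg_ne_zero.2 (mul_ne_zero (pow_ne_zero _ hμ) hx₁0)
  have hlead : v (-(μ ^ p * x₁)) = -(p * (M + b)) := by
    rw [hv.map_neg, hv.map_mul _ _ (pow_ne_zero _ hμ) hx₁0, hv.map_pow hμ, hμv, hx₁v]; ring
  have hrest := hv.add_eq_of_lt hlead0
    (y := x₂ + (x₁ ^ p + a ^ p - (x₁ + a) ^ p) / (p : K) - p * S) (by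
      rw [hlead]
      refine ((hx₂ge.mono ?_).add hv hD).sub hv (hmul.mono ?_) <;> nlinarith)
  rw [← hXp, hlead] at hrest
  have hX0 : x₂ - μ * x₁ ≠ 0 := fun h => hrest.1 (by rw [h, zero_pow hp.ne_zero])
  refine ⟨hx₁ge, hx₂ge, hX0, ?_⟩
  have h := hrest.2
  rw [hv.map_pow hX0] at h
  exact mul_left_cancel₀ (by omega : (p : ℤ) ≠ 0) (by linarith)

end Generators

section Operators

variable {F K : Type*} [Field F] [Field K] [Algebra F K] {v : K → ℤ}

/-- Bounds for the operators `N` and `S * ∑ i < p, c i • N ^ i - 1`, where `N + 1 = S ^ p` and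
`(S ^ p) ^ p = 1`. -/
theorem Raises.truncated_exponentiation (hv : IsDiscVal v) {p : ℕ} (hp : p.Prime)
    {b₁ b₂ : ℤ} (hb₁ : 0 ≤ b₁) (hb : b₁ ≤ b₂) {S N P : Module.End F K} {c : ℕ → F}
    (hc0 : c 0 = 1)
    (hc : ∀ i < p, ValGE v (i * (b₁ - b₂)) (algebraMap F K (c i)))
    (hN : 1 + N = S ^ p) (hS : (S ^ p) ^ p = 1)
    (hP : P = S * (∑ i ∈ Finset.range p, c i • N ^ i) - 1)
    (hSr : Raises v b₁ (S - 1)) (hNr : Raises v b₂ N) :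
    Raises v b₁ P ∧ Raises v (v (p : K) + b₂) (N ^ p) ∧ Commute N P ∧
      Raises v (v (p : K) - (p - 1) * b₂ + p * b₁) (P ^ p - N) := by
  have hp' : (2 : ℤ) ≤ p := by exact_mod_cast hp.two_le
  have hNS : Commute N S := by
    rw [eq_sub_of_add_eq' hN]
    exact ((Commute.refl S).pow_left p).sub_left (Commute.one_left S)
  obtain ⟨W, hW⟩ : ∃ W, W = ∑ i ∈ Finset.range (p - 1), c (i + 1) • N ^ i := ⟨_, rfl⟩
  have hNW : Commute N W := by
    rw [hW]
    exact Commute.sum_right _ _ _ fun i _ => ((Commute.refl N).pow_right i).smul_right _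
  have hSW : Commute S W := by
    rw [hW]
    exact Commute.sum_right _ _ _ fun i _ => (hNS.symm.pow_right i).smul_right _
  have hU : ∑ i ∈ Finset.range p, c i • N ^ i = 1 + N * W := by
    obtain ⟨q, rfl⟩ : ∃ q, p = q + 1 := ⟨p - 1, by have := hp.pos; omega⟩
    rw [Finset.sum_range_succ', hW, Nat.add_sub_cancel, Finset.mul_sum, pow_zero, hc0, one_smul,
      add_comm]
    simp_rw [mul_smul_comm, pow_succ']
  rw [hU] at hP
  have hWr : Raises v (b₁ - b₂) W := by
    rw [hW]
    refine Raises.sum hv fun i hi => ?_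
    have hi' : i + 1 < p := by have := Finset.mem_range.1 hi; omega
    refine ((hNr.pow i).smul hv (hc (i + 1) hi')).mono ?_
    push_cast
    nlinarith [mul_nonneg (Int.natCast_nonneg i) hb₁]
  have hVr : Raises v b₁ (N * W) := (hNr.mul hWr).mono (by linarith)
  have hS0 : Raises v 0 S := by
    simpa using (hSr.mono hb₁).add hv Raises.one
  have hPr : Raises v b₁ P := by
    have : P = (S - 1) + S * (N * W) := by rw [hP]; noncomm_ring
    rw [this]
    exact hSr.add hv ((hS0.mul hVr).mono (by linarith))
  have hNp : Raises v (v (p : K) + b₂) (N ^ p) := by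
    have h := (Raises.one_add_pow_sub hv hp (hb₁.trans hb) hNr).neg hv
    rw [hN, hS] at h
    simpa using h
  refine ⟨hPr, hNp, ?_, ?_⟩
  · rw [hP]
    exact (hNS.mul_right ((Commute.one_right N).add_right
      ((Commute.refl N).mul_right hNW))).sub_right (Commute.one_right N)
  have h1P : 1 + P = S * (1 + N * W) := by rw [hP]; abel
  have hpow : (1 + P) ^ p = (1 + N) * (1 + N * W) ^ p := by
    rw [h1P, hN, ((Commute.one_right S).add_right (hNS.symm.mul_right hSW)).mul_pow]
  have heq : P ^ p - N = (1 + N) * ((N * W) ^ p + ((1 + N * W) ^ p - 1 - (N * W) ^ p)) -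
      ((1 + P) ^ p - 1 - P ^ p) := by
    rw [hpow, sub_sub ((1 + N * W) ^ p), add_comm (1 : Module.End F K) ((N * W) ^ p), ← sub_sub,
      ← add_sub_assoc, add_sub_cancel, mul_sub, mul_one]
    abel
  have hV := Raises.one_add_pow_sub hv hp hb₁ hVr
  have hVp : Raises v (v (p : K) - (p - 1) * b₂ + p * b₁) ((N * W) ^ p) := by
    rw [hNW.mul_pow]
    exact (hNp.mul (hWr.pow p)).mono (by linarith)
  have hle : v (p : K) - (p - 1) * b₂ + p * b₁ ≤ v (p : K) + b₁ := by nlinarith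
  have h1N : Raises v 0 (1 + N) := Raises.one.add hv (hNr.mono (hb₁.trans hb))
  rw [heq]
  exact ((h1N.mul (hVp.add hv (hV.mono hle))).mono (by linarith)).sub hv
    ((Raises.one_add_pow_sub hv hp hb₁ hPr).mono hle)

/-- The defect of multiplicativity of the operators `N ^ (a / p) * P ^ (a % p)`. -/
theorem Raises.digit_mul_sub (hv : IsDiscVal v) {p : ℕ} (hp : p.Prime) {b₁ b₂ e : ℤ}
    (hb₁ : 0 ≤ b₁) (hb : (p : ℤ) ^ 2 * b₁ ≤ b₂) {N P : Module.End F K} (hcomm : Commute N P)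
    (hNr : Raises v b₂ N) (hPr : Raises v b₁ P) (hNp : Raises v (e + b₂) (N ^ p))
    (hE : Raises v (e - (p - 1) * b₂ + p * b₁) (P ^ p - N)) {Q : ℕ → Module.End F K}
    (hQ : ∀ a, Q a = if a < p ^ 2 then N ^ (a / p) * P ^ (a % p) else 0)
    {j r : ℕ} (hj : j < p ^ 2) (hr : r < p ^ 2) :
    Raises v (e - p * b₂ - ((p : ℤ) ^ 2 - p + 1) * b₁ + ((j / p : ℕ) + (r / p : ℕ)) * b₂ +
      ((j % p : ℕ) + (r % p : ℕ)) * (p * b₁) + b₁) (Q j * Q r - Q (j + r)) ∧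
    (j % p + r % p < p ∧ j / p + r / p < p → Q j * Q r = Q (j + r)) := by
  have hp2 : (2 : ℤ) ≤ p := by exact_mod_cast hp.two_le
  have hjd := Nat.div_add_mod j p
  have hrd := Nat.div_add_mod r p
  have hj0 := Nat.mod_lt j hp.pos
  have hr0 := Nat.mod_lt r hp.pos
  have hprod : Q j * Q r = N ^ (j / p + r / p) * P ^ (j % p + r % p) := by
    rw [hQ, hQ, if_pos hj, if_pos hr, pow_add, pow_add, mul_assoc, mul_assoc,
      ← mul_assoc (P ^ (j % p)), ((hcomm.pow_pow (r / p) (j % p)).eq).symm, mul_assoc]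
  generalize hj1' : j / p = j1 at *
  generalize hj0' : j % p = j0 at *
  generalize hr1' : r / p = r1 at *
  generalize hr0' : r % p = r0 at *
  have hNpow : ∀ k : ℕ, p ≤ k → Raises v (e + ((k : ℤ) - p + 1) * b₂) (N ^ k) := by
    intro k hk
    obtain ⟨l, rfl⟩ := Nat.exists_eq_add_of_le hk
    rw [pow_add]
    exact (hNp.mul (hNr.pow l)).mono (by push_cast; linarith)
  have hb₂ : 0 ≤ b₂ := le_trans (by positivity) hb
  rcases lt_or_ge (j0 + r0) p with h0 | h0
  · have h0' : (j0 : ℤ) + r0 ≤ p - 1 := by omega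
    rcases lt_or_ge (j1 + r1) p with h1 | h1
    · have hsum : j + r = p * (j1 + r1) + (j0 + r0) := by rw [← hjd, ← hrd]; ring
      have hlt : j + r < p ^ 2 := by
        rw [hsum, pow_two]
        calc p * (j1 + r1) + (j0 + r0) < p * (j1 + r1) + p := by omega
          _ = p * (j1 + r1 + 1) := by ring
          _ ≤ p * p := Nat.mul_le_mul_left p h1
      have hQs : Q j * Q r = Q (j + r) := by
        rw [hprod, hQ (j + r), if_pos hlt, hsum, Nat.mul_add_div hp.pos, Nat.mul_add_mod,
          Nat.div_eq_of_lt h0, Nat.mod_eq_of_lt h0, add_zero]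
      refine ⟨?_, fun _ => hQs⟩
      rw [hQs, sub_self]
      exact fun n x _ => ValGE.zero _
    · refine ⟨?_, fun h => absurd h.2 h1.not_gt⟩
      have hge : ¬ j + r < p ^ 2 := by
        have := Nat.mul_le_mul_left p h1
        rw [not_lt, pow_two, ← hjd, ← hrd]
        linarith
      rw [hprod, hQ (j + r), if_neg hge, sub_zero]
      refine ((hNpow _ h1).mul (hPr.pow (j0 + r0))).mono ?_
      have : ((j0 : ℤ) + r0) * ((p - 1) * b₁) ≤ (p - 1) * ((p - 1) * b₁) :=
        mul_le_mul_of_nonneg_right h0' (mul_nonneg (by omega) hb₁)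
      push_cast
      nlinarith
  · refine ⟨?_, fun h => absurd h.1 h0.not_gt⟩
    obtain ⟨t, ht⟩ := Nat.exists_eq_add_of_le h0
    have htp : t < p := by omega
    have ht' : (t : ℤ) ≤ p - 2 := by omega
    have htb : (t : ℤ) * ((p - 1) * b₁) ≤ (p - 2) * ((p - 1) * b₁) :=
      mul_le_mul_of_nonneg_right ht' (mul_nonneg (by omega) hb₁)
    have hcast : (j0 : ℤ) + r0 = p + t := by exact_mod_cast ht
    rw [hcast, hprod, ht]
    have hsum : j + r = p * (j1 + r1 + 1) + t := by
      rw [← hjd, ← hrd]; linarith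
    have hmain : N ^ (j1 + r1) * P ^ (p + t) =
        N ^ (j1 + r1) * ((P ^ p - N) * P ^ t) + N ^ (j1 + r1 + 1) * P ^ t := by
      rw [pow_add P, sub_mul, mul_sub, pow_succ, mul_assoc, sub_add_cancel]
    have hfirst := (hNr.pow (j1 + r1)).mul (hE.mul (hPr.pow t))
    push_cast at hfirst
    rw [hmain]
    rcases lt_or_ge (j1 + r1 + 1) p with h1 | h1
    · have hlt : j + r < p ^ 2 := by
        rw [hsum, pow_two]
        calc p * (j1 + r1 + 1) + t < p * (j1 + r1 + 1) + p := by omega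
          _ = p * (j1 + r1 + 1 + 1) := by ring
          _ ≤ p * p := Nat.mul_le_mul_left p h1
      rw [hQ (j + r), if_pos hlt, hsum, Nat.mul_add_div hp.pos, Nat.mul_add_mod,
          Nat.div_eq_of_lt htp, Nat.mod_eq_of_lt htp, add_zero, add_sub_cancel_right]
      exact hfirst.mono (by nlinarith)
    · have hge : ¬ j + r < p ^ 2 := by
        have := Nat.mul_le_mul_left p h1
        rw [not_lt, pow_two, hsum]
        linarith
      rw [hQ (j + r), if_neg hge, sub_zero]
      refine (hfirst.mono (by nlinarith)).add hv
        (((hNpow _ h1).mul (hPr.pow t)).mono ?_)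
      push_cast
      nlinarith

end Operators

section Scaffold

/-- Consequences of the size assumptions on the ramification data. -/
theorem ramification_bounds {p b M P : ℤ} (hp : 2 ≤ p) (hb : 0 < b) (hM : (p ^ 2 - 1) * b < M)
    (hP : (p - 1) * M + (2 * p * (p - 1) + 1) * b < P) :
    0 < M ∧ (p ^ 2 - p) * b < P ∧ (p ^ 2 - p) * b < M ∧ (p - 1) * (M + p * b) < P ∧
      p ^ 2 * b ≤ M + b ∧ 0 < P := by
  have h1 : 0 < (p - 1) * b := mul_pos (by omega) hb
  have h2 : 0 < p * (p - 1) * b := mul_pos (mul_pos (by omega) (by omega)) hb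
  have h3 : 0 < (p ^ 2 - 1) * b := by linarith
  have hM0 : 0 < M := h3.trans hM
  have h4 : 0 < (p - 1) * M := mul_pos (by omega) hM0
  refine ⟨hM0, ?_, ?_, ?_, ?_, ?_⟩ <;> linarith

variable {F K : Type*} [Field F] [Field K] [Algebra F K] {v0 : F → ℤ} {v : K → ℤ}

/-- How much `σ ^ p - 1` and `σ - 1` raise valuations. -/
theorem raises_of_generators [CharZero K] [IsGalois F K] [FiniteDimensional F K]
    (hv : IsDiscVal v) {p : ℕ} (hp : p.Prime) (hdeg : Module.finrank F K = p ^ 2)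
    (hcyc : IsCyclic (K ≃ₐ[F] K))
    (hram : ∀ x : F, x ≠ 0 → v (algebraMap F K x) = (p : ℤ) ^ 2 * v0 x)
    {a μ : F} (ha : a ≠ 0) (hμ : μ ≠ 0) {b m P : ℤ} (hb : 0 < b) (hpb : ¬ (p : ℤ) ∣ b)
    (hav : v0 a = -b) (hμv : v0 μ = -m) (hpv : v (p : K) = P)
    (hM : ((p : ℤ) ^ 2 - 1) * b < (p : ℤ) ^ 2 * m)
    (hP : (p - 1) * ((p : ℤ) ^ 2 * m) + (2 * p * (p - 1) + 1) * b < P)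
    {x₁ x₂ : K} (hx₁ : x₁ ^ p - x₁ = algebraMap F K a)
    (hx₂ : x₂ ^ p - x₂ = algebraMap F K (μ ^ p * a) +
      (x₁ ^ p + (algebraMap F K a) ^ p - (x₁ + algebraMap F K a) ^ p) / (p : K))
    {σ : K ≃ₐ[F] K} {ε δ : K} (hσ₁ : σ x₁ = x₁ + 1 + ε) (hε : ValGE v 0 ε)
    (hσ₂ : σ x₂ = x₂ + (x₁ ^ p + 1 - (x₁ + 1) ^ p) / (p : K) + δ) (hδ : ValGE v 0 δ) :
    Raises v ((p : ℤ) ^ 2 * m + b) (((σ ^ p).toLinearMap : Module.End F K) - 1) ∧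
      Raises v b ((σ.toLinearMap : Module.End F K) - 1) := by
  have hp2 : (2 : ℤ) ≤ p := by exact_mod_cast hp.two_le
  have hμK : v (algebraMap F K μ) = -((p : ℤ) ^ 2 * m) := by rw [hram _ hμ, hμv]; ring
  have hdvd : (p : ℤ) ∣ (p : ℤ) ^ 2 * m := Dvd.intro (p * m) (by ring)
  generalize (p : ℤ) ^ 2 * m = M at *
  obtain ⟨hM0, hPb, hMb, hPs, -, -⟩ := ramification_bounds hp2 hb hM hP
  obtain ⟨hx₁ge, hx₂ge, hX0, hXv⟩ := hv.map_sub_mul hp (by simpa using ha) (by simpa using hμ)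
    hb hM0 (by rw [hram _ ha, hav]; ring) hμK (by rw [hpv]; exact hPb) hMb hx₁
    (by rw [hx₂, map_mul, map_pow])
  have hXnd : ¬ (p : ℤ) ∣ v (x₂ - algebraMap F K μ * x₁) := by
    rw [hXv, Int.dvd_neg]
    exact fun h => hpb ((Int.dvd_add_right hdvd).1 h)
  have hτx₁ : (σ ^ p) x₁ = x₁ := AlgEquiv.pow_prime_apply_of_pow_sub hp hdeg hcyc hx₁ σ
  have hpb0 : 0 < p * b := mul_pos (by omega) hb
  constructor
  · refine hv.raises_sub_one hp hdeg hram hX0 hXnd (by omega) ?_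
    rw [hXv, map_sub, map_mul, AlgEquiv.commutes, hτx₁, sub_sub_sub_cancel_right, neg_add_cancel]
    refine hv.valGE_zero_of_pow_sub_eq hp (s := M + p * b) (by omega) hx₂ge
      (by rw [hpv]; exact hPs) ?_
    rw [add_sub_cancel, ← map_pow, ← map_sub, hx₂]
    simp only [map_add, map_sub, map_mul, map_pow, map_div₀, map_natCast, AlgEquiv.commutes, hτx₁]
  · refine hv.raises_sub_one hp hdeg hram hX0 hXnd hb.le ?_
    have heq : σ (x₂ - algebraMap F K μ * x₁) - (x₂ - algebraMap F K μ * x₁) =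
        (x₁ ^ p + 1 ^ p - (x₁ + 1) ^ p) / (p : K) + δ - algebraMap F K μ * (1 + ε) := by
      rw [map_sub, map_mul, AlgEquiv.commutes, hσ₁, hσ₂, one_pow]; ring
    rw [heq, hXv]
    have hμge : ValGE v (-M) (algebraMap F K μ) := Or.inr hμK.ge
    refine ((hv.valGE_witt hp hx₁ge (ValGE.one hv) fun k _ hkp => ?_).add hv
      (hδ.mono (by linarith))).sub hv
        ((hμge.mul hv ((ValGE.one hv).add hv hε)).mono (by linarith))
    have hk : (k : ℤ) ≤ p - 1 := by omega
    have : (k : ℤ) * (p * b) ≤ (p - 1) * (p * b) := mul_le_mul_of_nonneg_right hk hpb0.le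
    linarith

/-- A lower bound for the valuation of a generalized binomial coefficient. -/
theorem IsDiscVal.valGE_binomial (hv : IsDiscVal v) {p : ℕ} (hp : p.Prime)
    (hvp : 0 < v (p : K)) {μ : F} {M : ℤ} (hM : 0 ≤ M) (hμ : ValGE v (-M) (algebraMap F K μ))
    {i : ℕ} (hi : i < p) : ValGE v (i * -M)
      (algebraMap F K ((∏ k ∈ Finset.range i, (μ - (k : F))) / (Nat.factorial i : F))) := by
  have hprod : ∀ i : ℕ, ValGE v (i * -M)
      (∏ k ∈ Finset.range i, (algebraMap F K μ - (k : K))) := by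
    intro i
    induction i with
    | zero => simpa using ValGE.one hv
    | succ i ih =>
      rw [Finset.prod_range_succ]
      refine (ih.mul hv (hμ.sub hv ((ValGE.natCast hv i).mono (by omega)))).mono ?_
      push_cast; linarith
  have hfac : ValGE v 0 ((Nat.factorial i : K)⁻¹) :=
    hv.valGE_inv_natCast_of_coprime hvp (hp.coprime_factorial_of_lt hi).symm
  have := (hprod i).mul hv hfac
  rw [add_zero, ← div_eq_mul_inv] at this
  simpa using this

end Scaffold

/-- Proposition 4.4: if `p²e₀ − (p+1)b₂ + (p−1)b₁ > 0` then for
`0 ≤ j, r < p²`,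
`π₀^{−w_j}·Ψ^{(j)}·ρ_r ≡ π₀^{d_{j+r}−d_r−w_j}·ρ_{j+r} mod 𝔐₂^{p²e₀−p·b₂−(p²−p+1)·b₁}`
(note `ρ_{j+r} = 0` when `j + r ≥ p²`, since `Ψ^{(a)} = 0` for `a ≥ p²`),
with equality when there is no carry in adding the `p`-adic expansions of
`j` and `r`. -/
theorem statement17
    (p : ℕ) (hp : p.Prime)
    (K0 K2 : Type*) [Field K0] [Field K2] [CharZero K0] [CharZero K2]
    [Algebra K0 K2] [IsGalois K0 K2] [FiniteDimensional K0 K2]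
    (hdeg : Module.finrank K0 K2 = p ^ 2)
    (hcyc : IsCyclic (K2 ≃ₐ[K0] K2))
    (v0 : K0 → ℤ) (v2 : K2 → ℤ)
    (hv0 : IsDiscVal v0) (hv2 : IsDiscVal v2)
    (e0 : ℤ) (he0 : e0 = v0 (p : K0)) (he0pos : 1 ≤ e0)
    (hram : ∀ x : K0, x ≠ 0 → v2 (algebraMap K0 K2 x) = (p : ℤ) ^ 2 * v0 x)
    (a1 μ a2 : K0) (ha1 : a1 ≠ 0) (hμ0 : μ ≠ 0)
    (hwitt : ∀ y : K0, y ^ p - y ≠ a1)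
    (hnd : ¬ ((p : ℤ) ∣ v0 a1))
    (hneg : v0 a1 < 0)
    (hbd : -((p : ℤ) * e0) < ((p : ℤ) ^ 2 - 1) * v0 a1)
    (m : ℤ) (hm : m = -v0 μ) (hmpos : 0 < m)
    (hmu1 : (p : ℤ) ^ 2 * (p - 1) * m - (2 * p * (p - 1) + 1) * v0 a1 < (p : ℤ) ^ 2 * e0)
    (hmu2 : -(((p : ℤ) ^ 2 - 1) * v0 a1) < (p : ℤ) ^ 2 * m)
    (ha2 : a2 = μ ^ p * a1)
    (x1 x2 : K2)
    (hx1 : x1 ^ p - x1 = algebraMap K0 K2 a1)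
    (hx2 : x2 ^ p - x2 = algebraMap K0 K2 a2 +
      (x1 ^ p + (algebraMap K0 K2 a1) ^ p - (x1 + algebraMap K0 K2 a1) ^ p) / (p : K2))
    (hgen : Algebra.adjoin K0 {x1, x2} = ⊤)
    (b1 b2 : ℤ) (hb1 : b1 = -v0 a1) (hb2 : b2 = (p : ℤ) ^ 2 * m + b1)
    (σ1 : K2 ≃ₐ[K0] K2) (ε δ' : K2)
    (hσ1x1 : σ1 x1 = x1 + 1 + ε)
    (hε : ε ≠ 0) (hεv : v2 ε = (p : ℤ) ^ 2 * e0 - p * (p - 1) * b1)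
    (hσ1x2 : σ1 x2 = x2 + (x1 ^ p + 1 - (x1 + 1) ^ p) / (p : K2) + δ')
    (hδ' : δ' = 0 ∨ 0 < v2 δ')
    (Ψ1 Ψ2 : Module.End K0 K2)
    (hΨ2 : Ψ2 = ((σ1 ^ p).toLinearMap : Module.End K0 K2) - 1)
    (hΨ1 : Ψ1 = (σ1.toLinearMap : Module.End K0 K2) *
      (∑ i ∈ Finset.range p,
        ((∏ k ∈ Finset.range i, (μ - (k : K0))) / (Nat.factorial i : K0)) • Ψ2 ^ i) - 1)
    (π0 : K0) (hπ0 : π0 ≠ 0) (hπ0v : v0 π0 = 1)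
    (ρ0 : K2) (hρ0 : ρ0 ≠ 0) (hρ0v : v2 ρ0 = b2 % (p : ℤ) ^ 2)
    (d : ℕ → ℤ)
    (hd : ∀ a : ℕ, a < p ^ 2 →
      d a = Int.fdiv ((1 + ((a / p : ℕ) : ℤ)) * b2 + ((a % p : ℕ) : ℤ) * (p : ℤ) * b1)
        ((p : ℤ) ^ 2))
    (Ψf : ℕ → Module.End K0 K2)
    (hΨf : ∀ a : ℕ, Ψf a = if a < p ^ 2 then Ψ2 ^ (a / p) * Ψ1 ^ (a % p) else 0)
    (ρ : K2) (hρ : ρ = algebraMap K0 K2 (π0 ^ d 0) * ρ0)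
    (ρf : ℕ → K2) (hρf : ∀ a : ℕ, ρf a = algebraMap K0 K2 (π0 ^ (-d a)) * Ψf a ρ)
    (wj : ℕ → ℤ)
    (hwj : ∀ j : ℕ, j < p ^ 2 →
      IsLeast {x : ℤ | ∃ a : ℕ, a < p ^ 2 - j ∧ x = d (j + a) - d a} (wj j))
    (hbig : 0 < (p : ℤ) ^ 2 * e0 - (p + 1) * b2 + (p - 1) * b1) :
    ∀ j r : ℕ, j < p ^ 2 → r < p ^ 2 →
      ((algebraMap K0 K2 (π0 ^ (-wj j)) * Ψf j (ρf r) -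
          algebraMap K0 K2 (π0 ^ (d (j + r) - d r - wj j)) * ρf (j + r) = 0) ∨
        (p : ℤ) ^ 2 * e0 - p * b2 - ((p : ℤ) ^ 2 - p + 1) * b1 ≤
          v2 (algebraMap K0 K2 (π0 ^ (-wj j)) * Ψf j (ρf r) -
          algebraMap K0 K2 (π0 ^ (d (j + r) - d r - wj j)) * ρf (j + r))) ∧
      (j % p + r % p < p ∧ j / p + r / p < p →
        algebraMap K0 K2 (π0 ^ (-wj j)) * Ψf j (ρf r) =
          algebraMap K0 K2 (π0 ^ (d (j + r) - d r - wj j)) * ρf (j + r)) := by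
  have hp0 : (p : K0) ≠ 0 := by exact_mod_cast hp.ne_zero
  have hp2 : (2 : ℤ) ≤ p := by exact_mod_cast hp.two_le
  have hb1pos : 0 < b1 := by omega
  have hvp : v2 (p : K2) = (p : ℤ) ^ 2 * e0 := by
    rw [← map_natCast (algebraMap K0 K2), hram _ hp0, he0]
  have hM : ((p : ℤ) ^ 2 - 1) * b1 < (p : ℤ) ^ 2 * m := by rw [hb1]; linarith
  have hP : (p - 1) * ((p : ℤ) ^ 2 * m) + (2 * p * (p - 1) + 1) * b1 < (p : ℤ) ^ 2 * e0 := by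
    rw [hb1]; linarith
  have hbounds := ramification_bounds hp2 hb1pos hM hP
  obtain ⟨hNr, hSr⟩ := raises_of_generators hv2 hp hdeg hcyc hram ha1 hμ0 hb1pos
    (by rwa [hb1, Int.dvd_neg]) (by omega) (by omega) hvp hM hP hx1 (by rw [hx2, ha2]) hσ1x1
    (Or.inr (by rw [hεv]; linarith [hbounds.2.1])) hσ1x2 (hδ'.imp_right le_of_lt)
  rw [← hΨ2, ← hb2] at hNr
  have hSp : ((σ1.toLinearMap : Module.End K0 K2) ^ p) ^ p = 1 := by
    have hσ : σ1 ^ (p ^ 2) = 1 := by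
      rw [← hdeg, ← IsGalois.card_aut_eq_finrank K0 K2]
      exact pow_card_eq_one'
    rw [← pow_mul, ← pow_two, ← AlgEquiv.pow_toLinearMap, hσ]
    rfl
  have hμge : ValGE v2 (-((p : ℤ) ^ 2 * m)) (algebraMap K0 K2 μ) :=
    Or.inr (by rw [hram _ hμ0, hm]; linarith)
  obtain ⟨hPr, hNp, hcomm, hE⟩ := Raises.truncated_exponentiation hv2 hp hb1pos.le
    (by linarith [hbounds.1] : b1 ≤ b2) (by simp)
    (fun i hi => (hv2.valGE_binomial hp (by rw [hvp]; exact hbounds.2.2.2.2.2) hbounds.1.le hμge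
      hi).mono (by rw [hb2]; linarith))
    (by rw [hΨ2, AlgEquiv.pow_toLinearMap]; abel) hSp hΨ1 hSr hNr
  rw [hvp] at hNp hE
  have hπK : algebraMap K0 K2 π0 ≠ 0 := by simpa using hπ0
  have hπge : ∀ k : ℤ, ValGE v2 ((p : ℤ) ^ 2 * k) (algebraMap K0 K2 (π0 ^ k)) := fun k =>
    Or.inr (by rw [map_zpow₀, hv2.map_zpow hπK, hram _ hπ0, hπ0v]; linarith)
  have hpp : (0 : ℤ) < (p : ℤ) ^ 2 := by positivity
  have hd0 : d 0 = b2 / (p : ℤ) ^ 2 := by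
    rw [hd 0 (pow_pos hp.pos 2), Int.fdiv_eq_ediv_of_nonneg _ hpp.le]; simp
  have hd0' : (p : ℤ) ^ 2 * d 0 + b2 % (p : ℤ) ^ 2 = b2 := hd0 ▸ Int.mul_ediv_add_emod b2 _
  have hρge : ValGE v2 b2 ρ := by
    rw [hρ]
    exact ((hπge _).mul hv2 (ValGE.self ρ0)).mono (by rw [hρ0v]; exact hd0'.ge)
  have hres : b2 % (p : ℤ) ^ 2 ≤ b1 := by
    rw [hb2, Int.mul_add_emod_self_left]
    linarith [Int.mul_ediv_add_emod b1 ((p : ℤ) ^ 2),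
      mul_nonneg hpp.le (Int.ediv_nonneg hb1pos.le hpp.le)]
  have hdle : ∀ a < p ^ 2, (p : ℤ) ^ 2 * d a ≤
      (1 + ((a / p : ℕ) : ℤ)) * b2 + ((a % p : ℕ) : ℤ) * (p : ℤ) * b1 := fun a ha => by
    rw [hd a ha, Int.fdiv_eq_ediv_of_nonneg _ hpp.le]
    exact Int.mul_ediv_self_le hpp.ne'
  intro j r hj hr
  obtain ⟨hraise, hnocarry⟩ := Raises.digit_mul_sub hv2 hp hb1pos.le
    (by rw [hb2]; exact hbounds.2.2.2.2.1) hcomm hNr hPr hNp hE hΨf hj hr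
  have hw : wj j ≤ d j - d 0 := (hwj j hj).2 ⟨0, by omega, by simp⟩
  have heq : algebraMap K0 K2 (π0 ^ (-wj j)) * Ψf j (ρf r) -
      algebraMap K0 K2 (π0 ^ (d (j + r) - d r - wj j)) * ρf (j + r) =
      algebraMap K0 K2 (π0 ^ (-wj j - d r)) * (Ψf j * Ψf r - Ψf (j + r)) ρ := by
    have h1 : π0 ^ (-wj j - d r) = π0 ^ (-wj j) * π0 ^ (-d r) := by
      rw [← zpow_add₀ hπ0, sub_eq_add_neg]
    have h2 : π0 ^ (-wj j - d r) = π0 ^ (d (j + r) - d r - wj j) * π0 ^ (-d (j + r)) := by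
      rw [← zpow_add₀ hπ0]; congr 1; ring
    rw [hρf r, hρf (j + r), ← Algebra.smul_def (π0 ^ (-d r)), map_smul, Algebra.smul_def,
      ← mul_assoc, ← mul_assoc, ← map_mul, ← map_mul, ← h1, ← h2, ← mul_sub]
    rfl
  refine ⟨?_, fun h => sub_eq_zero.1 ?_⟩
  · rw [heq]
    refine ((hπge _).mul hv2 (hraise b2 ρ hρge)).mono ?_
    have hw' := mul_le_mul_of_nonneg_left hw hpp.le
    have hj' := hdle j hj
    have hr' := hdle r hr
    linarith
  · rw [heq, hnocarry h, sub_self, LinearMap.zero_apply, mul_zero]
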